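/- In the group G_1 = ⟨a'_0, a''_0, a_1 | (a'_0)² = e, (a''_0)² = e, (a_1)² = e, a'_0·a_1 = a_1·a''_0⟩, the element a'_0·a_1 has infinite order. -/

import Mathlib

/-!
Fix a level `k`. Let `s n` be the reflection of `ℤ` given by `x ↦ n - x`, and send `a'_k` to `s 0`,
`a''_k` to `s 2`, every generator of lower level to the identity and every generator of higher
level, including `a_m`, to `s 1`. Conjugation by `s 1` swaps `s 0` and `s 2`, so this respects the
relations of `G_m`, and `a'_k * a_m` goes to a translation by one step.
-/

open FreeGroup

/-- Generators of the groups `G_m` and `G̃_m`: `.inl (i, false)` is `a'_i`,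
`.inl (i, true)` is `a''_i`, and `.inr ()` is `a_m`. -/
abbrev Gen (m : ℕ) := (Fin m × Bool) ⊕ Unit

/-- The defining relators of the group `G_m`. -/
def Gm.rels (m : ℕ) : Set (FreeGroup (Gen m)) :=
  {w | (∃ i : Fin m, ∃ t : Bool, w = of (.inl (i, t)) * of (.inl (i, t)))
    ∨ w = of (.inr ()) * of (.inr ())
    ∨ (∃ i j : Fin m, i < j ∧
        (w = of (.inl (i, false)) * of (.inl (j, false)) *
             (of (.inl (j, false)) * of (.inl (i, true)))⁻¹
       ∨ w = of (.inl (i, false)) * of (.inl (j, true)) *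
             (of (.inl (j, true)) * of (.inl (i, true)))⁻¹))
    ∨ (∃ i : Fin m, w = of (.inl (i, false)) * of (.inr ()) *
             (of (.inr ()) * of (.inl (i, true)))⁻¹)}

/-- The group `G_m`. -/
abbrev Gm (m : ℕ) := PresentedGroup (Gm.rels m)

def Gm.a' {m : ℕ} (i : Fin m) : Gm m := PresentedGroup.of (.inl (i, false))
def Gm.a'' {m : ℕ} (i : Fin m) : Gm m := PresentedGroup.of (.inl (i, true))
def Gm.am (m : ℕ) : Gm m := PresentedGroup.of (.inr ())

namespace Gm

variable {m : ℕ}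

theorem lift_eq_one_of_mem_rels {G : Type*} [Group G] {f : Gen m → G}
    (mul_self : ∀ g, f g * f g = 1)
    (swap : ∀ i j t, i < j →
      f (.inl (i, false)) * f (.inl (j, t)) = f (.inl (j, t)) * f (.inl (i, true)))
    (swap_am : ∀ i, f (.inl (i, false)) * f (.inr ()) = f (.inr ()) * f (.inl (i, true))) :
    ∀ w ∈ rels m, FreeGroup.lift f w = 1 := by
  rintro w (⟨i, t, rfl⟩ | rfl | ⟨i, j, hij, rfl | rfl⟩ | ⟨i, rfl⟩)
  · simp [mul_self]
  · simp [mul_self]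
  · simp only [_root_.map_mul, _root_.map_inv, lift_apply_of, mul_inv_eq_one, swap i j false hij]
  · simp only [_root_.map_mul, _root_.map_inv, lift_apply_of, mul_inv_eq_one, swap i j true hij]
  · simp only [_root_.map_mul, _root_.map_inv, lift_apply_of, mul_inv_eq_one, swap_am i]

/-- The images of the generators of `G_m` in the infinite dihedral group, encoded as
`DihedralGroup 0`, under the homomorphism used for level `k`. -/
def dihedralGen (k : Fin m) : Gen m → DihedralGroup 0
  | .inl (i, t) => if i < k then 1 else if i = k then .sr (bif t then 2 else 0) else .sr 1
  | .inr () => .sr 1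

theorem dihedralGen_mul_self (k : Fin m) (g : Gen m) : dihedralGen k g * dihedralGen k g = 1 := by
  rcases g with ⟨i, t⟩ | ⟨⟩
  · simp only [dihedralGen]
    split_ifs <;> simp
  · exact DihedralGroup.sr_mul_self 1

theorem dihedralGen_mul_sr_one (k i : Fin m) :
    dihedralGen k (.inl (i, false)) * .sr 1 = .sr 1 * dihedralGen k (.inl (i, true)) := by
  simp only [dihedralGen]
  split_ifs
  · simp
  · rfl
  · rfl

theorem dihedralGen_swap (k i j : Fin m) (t : Bool) (hij : i < j) :
    dihedralGen k (.inl (i, false)) * dihedralGen k (.inl (j, t)) =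
      dihedralGen k (.inl (j, t)) * dihedralGen k (.inl (i, true)) := by
  rcases lt_or_ge i k with hik | hki
  · simp [dihedralGen, hik]
  · have hkj : k < j := hki.trans_lt hij
    have image_j : dihedralGen k (.inl (j, t)) = .sr 1 := by
      simp [dihedralGen, hkj.not_gt, hkj.ne']
    rw [image_j, dihedralGen_mul_sr_one]

/-- The homomorphism from `G_m` to the infinite dihedral group that extends `dihedralGen k`,
used to show that `a'_k * a_m` has infinite order. -/
def toDihedral (k : Fin m) : Gm m →* DihedralGroup 0 :=
  PresentedGroup.toGroup <| lift_eq_one_of_mem_rels (dihedralGen_mul_self k) (dihedralGen_swap k)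
    (dihedralGen_mul_sr_one k)

theorem toDihedral_a'_mul_am (k : Fin m) : toDihedral k (a' k * am m) = .r 1 := by
  simp [toDihedral, a', am, dihedralGen]

end Gm

theorem stmt_0_general {m : ℕ} (k : Fin m) : ¬ IsOfFinOrder (Gm.a' k * Gm.am m) := by
  intro finite_order
  have finite_order_r : IsOfFinOrder (DihedralGroup.r 1 : DihedralGroup 0) :=
    Gm.toDihedral_a'_mul_am k ▸ (Gm.toDihedral k).isOfFinOrder finite_order
  exact orderOf_eq_zero_iff.mp DihedralGroup.orderOf_r_one finite_order_r

/-- In `G_1`, the element `a'_0 · a_1` has infinite order. -/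
theorem stmt_0 : ¬ IsOfFinOrder (Gm.a' (0 : Fin 1) * Gm.am 1) :=
  stmt_0_general 0
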